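/- Pointwise core inequality of the L-scheme (adjugate form): let d ≥ 1, let U, V, A be symmetric d×d real matrices, and let 0 < λm ≤ λM and Λ > 0 be real numbers with λm•I ⪯ U ⪯ A ⪯ V ⪯ λM•I and Λ ≥ λM^(d−1). Set E := V − U and ξ := max(det(U)/λM, λm^(d−1)). Then 0 ≤ (1 − λM^(d−1)/Λ)·trace(E) ≤ trace(E) − (1/Λ)·trace(adjugate(A) * E) ≤ (1 − ξ/Λ)·trace(E). -/

import Mathlib

/-!
Diagonalise `A`: the eigenvalues of `adjugate A` are the products of all but one of the eigenvalues
of `A`. As the latter lie in `[λm, λM]`, these products lie in `[λm^(d-1), λM^(d-1)]`. Completing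
such a product to `det A` costs a factor at most `λM`, so it is also at least
`det A / λM ≥ det U / λM`, where `det U ≤ det A` because `I ⪯ U^(-1/2) A U^(-1/2)` for definite `U`.
Hence `ξ I ⪯ adjugate A ⪯ λM^(d-1) I`, and pairing with the positive semidefinite matrix `E` under
the trace preserves both inequalities.
-/

section AdjugateConjugation

open Matrix

variable {n R : Type*} [Fintype n] [DecidableEq n] [CommRing R]

theorem adjugate_eq_det_smul_of_mul_eq_one {P Q : Matrix n n R} (h : P * Q = 1) :
    P.adjugate = P.det • Q := by
  calc P.adjugate = P.adjugate * P * Q := by rw [Matrix.mul_assoc, h, Matrix.mul_one]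
    _ = P.det • Q := by rw [adjugate_mul, Matrix.smul_mul, Matrix.one_mul]

theorem adjugate_conj_of_mul_eq_one {P Q : Matrix n n R} (h : P * Q = 1) (D : Matrix n n R) :
    (P * D * Q).adjugate = P * D.adjugate * Q := by
  have hdet : P.det * Q.det = 1 := by rw [← det_mul, h, det_one]
  simp only [adjugate_mul_distrib, adjugate_eq_det_smul_of_mul_eq_one h,
    adjugate_eq_det_smul_of_mul_eq_one (mul_eq_one_comm.1 h), Matrix.smul_mul, Matrix.mul_smul,
    smul_smul, hdet, one_smul, Matrix.mul_assoc]

end AdjugateConjugation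

section LoewnerOrder

open Matrix Finset Unitary
open scoped ComplexOrder MatrixOrder

theorem posSemidef_of_smul_one_le {n 𝕜 : Type*} [DecidableEq n] [RCLike 𝕜] {A : Matrix n n 𝕜}
    {a : ℝ} (ha : 0 ≤ a) (h : a • 1 ≤ A) : A.PosSemidef := by
  simpa using (Matrix.le_iff.1 h).add (PosSemidef.one.smul ha)

variable {n 𝕜 : Type*} [Fintype n] [RCLike 𝕜] {A B E U : Matrix n n 𝕜} {a b c : ℝ}

theorem trace_mul_nonneg_of_posSemidef (hA : A.PosSemidef) (hE : E.PosSemidef) :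
    0 ≤ (A * E).trace := by
  classical
  have hsqrt : CFC.sqrt E * CFC.sqrt E = E := CFC.sqrt_mul_sqrt_self E hE.nonneg
  calc 0 ≤ ((CFC.sqrt E)ᴴ * A * CFC.sqrt E).trace := (hA.conjTranspose_mul_mul_same _).trace_nonneg
    _ = (CFC.sqrt E * A * CFC.sqrt E).trace := by
      rw [(nonneg_iff_posSemidef.1 (CFC.sqrt_nonneg E)).isHermitian.eq]
    _ = (A * E).trace := by rw [Matrix.mul_assoc, trace_mul_comm, Matrix.mul_assoc, hsqrt]

theorem trace_mul_le_trace_mul (h : A ≤ B) (hE : E.PosSemidef) :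
    (A * E).trace ≤ (B * E).trace := by
  rw [← sub_nonneg, ← trace_sub, ← Matrix.sub_mul]
  exact trace_mul_nonneg_of_posSemidef (Matrix.le_iff.1 h) hE

variable [DecidableEq n]

theorem smul_trace_le_trace_mul (h : c • 1 ≤ A) (hE : E.PosSemidef) :
    c • E.trace ≤ (A * E).trace := by
  simpa using trace_mul_le_trace_mul h hE

theorem trace_mul_le_smul_trace (h : A ≤ c • 1) (hE : E.PosSemidef) :
    (A * E).trace ≤ c • E.trace := by
  simpa using trace_mul_le_trace_mul h hE

theorem conjStarAlgAut_diagonal_le_iff (Q : unitary (Matrix n n 𝕜)) {f g : n → ℝ} :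
    conjStarAlgAut 𝕜 _ Q (diagonal (RCLike.ofReal ∘ f)) ≤
      conjStarAlgAut 𝕜 _ Q (diagonal (RCLike.ofReal ∘ g)) ↔ ∀ i, f i ≤ g i := by
  rw [map_le_map_iff, Matrix.le_iff, diagonal_sub, posSemidef_diagonal_iff]
  simp

theorem conjStarAlgAut_diagonal_const (Q : unitary (Matrix n n 𝕜)) (c : ℝ) :
    conjStarAlgAut 𝕜 _ Q (diagonal (RCLike.ofReal ∘ fun _ => c)) = c • 1 := by
  rw [Function.comp_def, ← smul_one_eq_diagonal, map_smul, map_one,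
    RCLike.real_smul_eq_coe_smul (K := 𝕜)]

theorem smul_one_le_conjStarAlgAut_diagonal_iff (Q : unitary (Matrix n n 𝕜)) {f : n → ℝ} :
    c • 1 ≤ conjStarAlgAut 𝕜 _ Q (diagonal (RCLike.ofReal ∘ f)) ↔ ∀ i, c ≤ f i := by
  rw [← conjStarAlgAut_diagonal_const Q, conjStarAlgAut_diagonal_le_iff]

theorem conjStarAlgAut_diagonal_le_smul_one_iff (Q : unitary (Matrix n n 𝕜)) {f : n → ℝ} :
    conjStarAlgAut 𝕜 _ Q (diagonal (RCLike.ofReal ∘ f)) ≤ c • 1 ↔ ∀ i, f i ≤ c := by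
  rw [← conjStarAlgAut_diagonal_const Q, conjStarAlgAut_diagonal_le_iff]

theorem smul_one_le_iff_le_eigenvalues (hA : A.IsHermitian) :
    c • 1 ≤ A ↔ ∀ i, c ≤ hA.eigenvalues i := by
  conv_lhs => rw [hA.spectral_theorem]
  exact smul_one_le_conjStarAlgAut_diagonal_iff _

theorem le_smul_one_iff_eigenvalues_le (hA : A.IsHermitian) :
    A ≤ c • 1 ↔ ∀ i, hA.eigenvalues i ≤ c := by
  conv_lhs => rw [hA.spectral_theorem]
  exact conjStarAlgAut_diagonal_le_smul_one_iff _

theorem one_le_det_of_one_le (h : 1 ≤ A) : 1 ≤ A.det := by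
  have hA : A.IsHermitian := (nonneg_iff_posSemidef.1 (zero_le_one.trans h)).isHermitian
  have hone : ∀ i, 1 ≤ hA.eigenvalues i := by
    rwa [← smul_one_le_iff_le_eigenvalues, one_smul]
  rw [hA.det_eq_prod_eigenvalues]
  exact_mod_cast one_le_prod fun i _ => hone i

theorem det_le_det_of_posDef_of_le (hU : U.PosDef) (h : U ≤ A) : U.det ≤ A.det := by
  set R := CFC.sqrt U
  have hRR : R * R = U := CFC.sqrt_mul_sqrt_self U hU.posSemidef.nonneg
  have hR : IsUnit R.det := by
    refine isUnit_of_mul_isUnit_left (y := R.det) ?_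
    rw [← det_mul, hRR]
    exact hU.det_pos.ne'.isUnit
  have hRinv : 0 ≤ R⁻¹ := (nonneg_iff_posSemidef.1 (CFC.sqrt_nonneg U)).inv.nonneg
  have hone : 1 ≤ R⁻¹ * A * R⁻¹ :=
    calc 1 = R⁻¹ * U * R⁻¹ := by
          rw [← hRR, nonsing_inv_mul_cancel_left _ _ hR, mul_nonsing_inv _ hR]
      _ ≤ R⁻¹ * A * R⁻¹ := conjugate_le_conjugate_of_nonneg h hRinv
  calc U.det ≤ U.det * (R⁻¹ * A * R⁻¹).det :=
        le_mul_of_one_le_right hU.det_pos.le (one_le_det_of_one_le hone)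
    _ = (R * (R⁻¹ * A * R⁻¹) * R).det := by rw [← hRR]; simp only [det_mul]; ring
    _ = A.det := by
      rw [Matrix.mul_assoc R⁻¹, mul_nonsing_inv_cancel_left _ _ hR,
        nonsing_inv_mul_cancel_right _ _ hR]

theorem det_le_det_of_posSemidef_of_le (hU : U.PosSemidef) (h : U ≤ A) : U.det ≤ A.det := by
  by_cases hdet : U.det = 0
  · rw [hdet]
    exact (nonneg_iff_posSemidef.1 (hU.nonneg.trans h)).det_nonneg
  · exact det_le_det_of_posDef_of_le (hU.posDef_iff_det_ne_zero.2 hdet) h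

theorem adjugate_eq_conjStarAlgAut_diagonal (hA : A.IsHermitian) :
    A.adjugate = conjStarAlgAut 𝕜 _ hA.eigenvectorUnitary
      (diagonal (RCLike.ofReal ∘ fun i => ∏ j ∈ univ.erase i, hA.eigenvalues j)) := by
  conv_lhs => rw [hA.spectral_theorem]
  rw [conjStarAlgAut_apply, conjStarAlgAut_apply,
    adjugate_conj_of_mul_eq_one (Unitary.coe_mul_star_self _), adjugate_diagonal]
  simp [Function.comp_def]

theorem smul_one_le_adjugate_iff (hA : A.IsHermitian) :
    c • 1 ≤ A.adjugate ↔ ∀ i, c ≤ ∏ j ∈ univ.erase i, hA.eigenvalues j := by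
  rw [adjugate_eq_conjStarAlgAut_diagonal hA]
  exact smul_one_le_conjStarAlgAut_diagonal_iff _

theorem adjugate_le_smul_one_iff (hA : A.IsHermitian) :
    A.adjugate ≤ c • 1 ↔ ∀ i, ∏ j ∈ univ.erase i, hA.eigenvalues j ≤ c := by
  rw [adjugate_eq_conjStarAlgAut_diagonal hA]
  exact conjStarAlgAut_diagonal_le_smul_one_iff _

theorem pow_smul_one_le_adjugate (ha : 0 ≤ a) (h : a • 1 ≤ A) :
    a ^ (Fintype.card n - 1) • 1 ≤ A.adjugate := by
  have hA : A.IsHermitian := (posSemidef_of_smul_one_le ha h).isHermitian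
  refine (smul_one_le_adjugate_iff hA).2 fun i => ?_
  calc a ^ (Fintype.card n - 1) = ∏ _j ∈ univ.erase i, a := by simp
    _ ≤ ∏ j ∈ univ.erase i, hA.eigenvalues j :=
      prod_le_prod (fun _ _ => ha) fun j _ => (smul_one_le_iff_le_eigenvalues hA).1 h j

theorem adjugate_le_pow_smul_one (hA : A.PosSemidef) (h : A ≤ b • 1) :
    A.adjugate ≤ b ^ (Fintype.card n - 1) • 1 := by
  refine (adjugate_le_smul_one_iff hA.isHermitian).2 fun i => ?_
  calc ∏ j ∈ univ.erase i, hA.isHermitian.eigenvalues j ≤ ∏ _j ∈ univ.erase i, b :=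
      prod_le_prod (fun j _ => hA.eigenvalues_nonneg j)
        fun j _ => (le_smul_one_iff_eigenvalues_le hA.isHermitian).1 h j
    _ = b ^ (Fintype.card n - 1) := by simp

theorem det_div_smul_one_le_adjugate (hA : A.PosSemidef) (hb : 0 < b) (h : A ≤ b • 1) :
    (RCLike.re A.det / b) • 1 ≤ A.adjugate := by
  refine (smul_one_le_adjugate_iff hA.isHermitian).2 fun i => (div_le_iff₀ hb).2 ?_
  have hdet : RCLike.re A.det = ∏ j, hA.isHermitian.eigenvalues j := by
    rw [hA.isHermitian.det_eq_prod_eigenvalues, ← RCLike.ofReal_prod, RCLike.ofReal_re]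
  calc RCLike.re A.det
      = (∏ j ∈ univ.erase i, hA.isHermitian.eigenvalues j) * hA.isHermitian.eigenvalues i := by
        rw [hdet, prod_erase_mul _ _ (mem_univ i)]
    _ ≤ (∏ j ∈ univ.erase i, hA.isHermitian.eigenvalues j) * b :=
      mul_le_mul_of_nonneg_left ((le_smul_one_iff_eigenvalues_le hA.isHermitian).1 h i)
        (prod_nonneg fun j _ => hA.eigenvalues_nonneg j)

-- `U.det` is real because `U` is Hermitian; `RCLike.re` only moves it to `ℝ`, where `max` lives.
theorem max_det_div_pow_smul_one_le_adjugate (ha : 0 ≤ a) (hb : 0 < b) (haU : a • 1 ≤ U)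
    (hUA : U ≤ A) (hAb : A ≤ b • 1) :
    max (RCLike.re U.det / b) (a ^ (Fintype.card n - 1)) • 1 ≤ A.adjugate := by
  have haA : a • 1 ≤ A := haU.trans hUA
  have hdet : RCLike.re U.det / b ≤ RCLike.re A.det / b :=
    div_le_div_of_nonneg_right
      (RCLike.le_iff_re_im.1
        (det_le_det_of_posSemidef_of_le (posSemidef_of_smul_one_le ha haU) hUA)).1 hb.le
  refine max_rec' (fun c : ℝ => c • 1 ≤ A.adjugate) ?_ (pow_smul_one_le_adjugate ha haA)
  calc (RCLike.re U.det / b) • (1 : Matrix n n 𝕜) ≤ (RCLike.re A.det / b) • 1 :=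
        smul_le_smul_of_nonneg_right hdet zero_le_one
    _ ≤ A.adjugate :=
      det_div_smul_one_le_adjugate (posSemidef_of_smul_one_le ha haA) hb hAb

theorem lscheme_core_inequality_adjugate_general {lm lM L : ℝ} (hlm : 0 ≤ lm) (hlM : 0 < lM)
    (hUlm : lm • 1 ≤ U) (hUA : U ≤ A) (hAlM : A ≤ lM • 1) (hE : E.PosSemidef)
    (hL : lM ^ (Fintype.card n - 1) ≤ L) :
    0 ≤ (1 - lM ^ (Fintype.card n - 1) / L) • E.trace ∧
    (1 - lM ^ (Fintype.card n - 1) / L) • E.trace ≤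
      E.trace - (1 / L) • (A.adjugate * E).trace ∧
    E.trace - (1 / L) • (A.adjugate * E).trace ≤
      (1 - max (RCLike.re U.det / lM) (lm ^ (Fintype.card n - 1)) / L) • E.trace := by
  have hLpos : 0 < L := (pow_pos hlM _).trans_le hL
  have hA : A.PosSemidef := posSemidef_of_smul_one_le hlm (hUlm.trans hUA)
  have hlower := smul_trace_le_trace_mul
    (max_det_div_pow_smul_one_le_adjugate hlm hlM hUlm hUA hAlM) hE
  have hupper := trace_mul_le_smul_trace (adjugate_le_pow_smul_one hA hAlM) hE
  have hsub (c : ℝ) : (1 - c / L) • E.trace = E.trace - (1 / L) • c • E.trace := by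
    rw [sub_smul, one_smul, smul_smul, one_div_mul_eq_div]
  refine ⟨smul_nonneg (sub_nonneg.2 ((div_le_one hLpos).2 hL)) hE.trace_nonneg, ?_, ?_⟩
  · rw [hsub]
    gcongr
  · rw [hsub]
    gcongr

end LoewnerOrder

/-- Pointwise core inequality of the L-scheme (adjugate form). -/
theorem lscheme_core_inequality_adjugate (d : ℕ) (hd : 1 ≤ d)
    (U V A : Matrix (Fin d) (Fin d) ℝ)
    (hU : U.IsHermitian) (hV : V.IsHermitian) (hA : A.IsHermitian)
    (lm lM L : ℝ) (hlm : 0 < lm) (hlmM : lm ≤ lM) (hL : 0 < L)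
    (hUlm : (U - lm • (1 : Matrix (Fin d) (Fin d) ℝ)).PosSemidef)
    (hAU : (A - U).PosSemidef) (hVA : (V - A).PosSemidef)
    (hVlM : (lM • (1 : Matrix (Fin d) (Fin d) ℝ) - V).PosSemidef)
    (hLge : lM ^ (d - 1) ≤ L) :
    0 ≤ (1 - lM ^ (d - 1) / L) * (V - U).trace ∧
    (1 - lM ^ (d - 1) / L) * (V - U).trace ≤
      (V - U).trace - (1 / L) * (A.adjugate * (V - U)).trace ∧
    (V - U).trace - (1 / L) * (A.adjugate * (V - U)).trace ≤
      (1 - max (U.det / lM) (lm ^ (d - 1)) / L) * (V - U).trace := by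
  have hAlM : (lM • 1 - A).PosSemidef := sub_add_sub_cancel (lM • 1) V A ▸ hVlM.add hVA
  have hE : (V - U).PosSemidef := sub_add_sub_cancel V A U ▸ hVA.add hAU
  simpa only [Fintype.card_fin, RCLike.re_to_real, smul_eq_mul] using
    lscheme_core_inequality_adjugate_general hlm.le (hlm.trans_le hlmM) hUlm hAU hAlM hE
      (by rwa [Fintype.card_fin])
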